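/- For every integer n ≥ 1 one has the quadratic relation 0 = k²·p1(n)² + [2k²(α+β+n−1/2)·β_n − α·k² − β]·p1(n) − k²(α+β+n+3/2)(α+β+n−1/2)·β_n² − [k²(α+β+n+3/2)(α+β+n−1/2)·β_{n+1} − ((β+n+1/2)k² + (α+n+1/2))·(α+β+n−1/2) + k²(α+β+n+1/2)(α+β+n−3/2)·β_{n−1}]·β_n − (n/2)·(n/2 + α + β). -/

import Mathlib

open MeasureTheory

/-!
Write `w` for the weight, `σ = (1 - X²)(1 - k²X²)`, and `σ w' + σ' w = 2 θ w` with `θ` an odd cubic.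
Integration by parts makes `q ↦ σ q' + θ q` skew-adjoint for the moment functional of `w`, so its
matrix in the orthogonal basis `Pₙ` is antisymmetric and is determined by the two leading
coefficients of `σ Pₙ' + θ Pₙ`. The three-term recurrence turns this into
`σ Pₙ' = Bₙ Pₙ + βₙ Aₙ Pₙ₋₁` and `σ Pₙ₋₁' = (σ' - 2θ - Bₙ) Pₙ₋₁ - Aₙ₋₁ Pₙ` with explicit polynomials
`Aₙ`, `Bₙ`. As `Pₙ₋₁` and `Pₙ` are coprime, `σ` divides the determinant
`(σ' - 2θ - Bₙ) Bₙ + βₙ Aₙ₋₁ Aₙ`, and the vanishing of the `X²` coefficient of the remainder is the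
quadratic relation.
-/

section OrthogonalPolynomials

open Polynomial

variable {R : Type*} [CommRing R]

theorem dvd_mul_sub_mul_of_isCoprime {s p q a b c d : R}
    (hpq : IsCoprime p q) (h₁ : s ∣ a * p + b * q) (h₂ : s ∣ c * p + d * q) :
    s ∣ a * d - b * c := by
  obtain ⟨u, v, huv⟩ := hpq
  have key : a * d - b * c = (u * d - v * c) * (a * p + b * q)
      + (v * a - u * b) * (c * p + d * q) := by
    linear_combination (-(a * d - b * c)) * huv
  rw [key]
  exact (h₁.mul_left _).add (h₂.mul_left _)

/-- The even quartic `s₄ X⁴ + s₂ X² + s₀`, the leading coefficient `σ` of a symmetric Pearson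
equation. -/
noncomputable def evenQuartic (s₀ s₂ s₄ : R) : R[X] := C s₄ * X ^ 4 + C s₂ * X ^ 2 + C s₀

/-- The odd cubic `t₃ X³ + t₁ X`, half of the zeroth-order coefficient of a symmetric Pearson
equation. -/
noncomputable def oddCubic (t₁ t₃ : R) : R[X] := C t₃ * X ^ 3 + C t₁ * X

theorem coeff_X_mul_derivative (q : R[X]) (m : ℕ) :
    (X * derivative q).coeff m = m * q.coeff m := by
  rcases m with _ | m
  · simp
  · rw [coeff_X_mul, coeff_derivative, mul_comm]
    norm_cast

theorem coeff_X_sq_mul_X_mul_derivative (q : R[X]) (m : ℕ) :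
    (X ^ 2 * (X * derivative q)).coeff m = ((m : R) - 2) * (X ^ 2 * q).coeff m := by
  rw [coeff_X_pow_mul', coeff_X_pow_mul', coeff_X_mul_derivative]
  split_ifs with hm
  · rw [Nat.cast_sub hm, Nat.cast_ofNat]
  · rw [mul_zero]

theorem coeff_evenQuartic_mul_derivative_add_oddCubic_mul (s₀ s₂ s₄ t₁ t₃ : R) (q : R[X]) (m : ℕ) :
    (evenQuartic s₀ s₂ s₄ * derivative q + oddCubic t₁ t₃ * q).coeff (m + 1)
      = ((m - 2) * s₄ + t₃) * (X ^ 2 * q).coeff m + (m * s₂ + t₁) * q.coeff m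
        + (m + 2) * s₀ * q.coeff (m + 2) := by
  have factor : evenQuartic s₀ s₂ s₄ * derivative q + oddCubic t₁ t₃ * q
      = X * (C s₄ * (X ^ 2 * (X * derivative q)) + C t₃ * (X ^ 2 * q)
          + C s₂ * (X * derivative q) + C t₁ * q) + C s₀ * derivative q := by
    rw [evenQuartic, oddCubic]
    ring
  rw [factor]
  simp only [coeff_add, coeff_X_mul, coeff_C_mul, coeff_X_sq_mul_X_mul_derivative,
    coeff_X_mul_derivative, coeff_derivative]
  push_cast
  ring

theorem coeff_two_remainder_of_evenQuartic_dvd [IsDomain R] {s₀ s₂ s₄ a₀ a₂ a₄ a₆ : R}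
    (hs₄ : s₄ ≠ 0)
    (hdvd : evenQuartic s₀ s₂ s₄ ∣ C a₆ * X ^ 6 + C a₄ * X ^ 4 + C a₂ * X ^ 2 + C a₀) :
    s₄ ^ 2 * a₂ - s₄ * s₂ * a₄ + (s₂ ^ 2 - s₀ * s₄) * a₆ = 0 := by
  set r : R[X] := C (s₄ ^ 2 * a₂ - s₄ * s₂ * a₄ + (s₂ ^ 2 - s₀ * s₄) * a₆) * X ^ 2
    + C (s₄ ^ 2 * a₀ - s₀ * (s₄ * a₄ - s₂ * a₆)) with hr
  have division : C (s₄ ^ 2) * (C a₆ * X ^ 6 + C a₄ * X ^ 4 + C a₂ * X ^ 2 + C a₀)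
      = evenQuartic s₀ s₂ s₄ * (C (s₄ * a₆) * X ^ 2 + C (s₄ * a₄ - s₂ * a₆)) + r := by
    simp only [hr, evenQuartic, map_mul, map_sub, map_add, map_pow]
    ring
  have hr_dvd : evenQuartic s₀ s₂ s₄ ∣ r := by
    rw [← dvd_add_right (dvd_mul_right _ _), ← division]
    exact hdvd.mul_left _
  have hr_degree : r.degree < (evenQuartic s₀ s₂ s₄).degree := by
    have hσ : (evenQuartic s₀ s₂ s₄).degree = 4 := by
      rw [evenQuartic]
      compute_degree!
    have hr_le : r.degree ≤ 2 := by
      rw [hr]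
      compute_degree
    rw [hσ]
    exact hr_le.trans_lt (by norm_num)
  have hr_zero := eq_zero_of_dvd_of_degree_lt hr_dvd hr_degree
  have hr_coeff := congrArg (coeff · 2) hr_zero
  rw [hr] at hr_coeff
  simpa only [coeff_add, coeff_C_mul_X_pow, coeff_C, coeff_zero, if_true, add_zero,
    OfNat.ofNat_ne_zero, if_false] using hr_coeff

theorem remainder_det_eq_zero_of_evenQuartic_dvd [IsDomain R] {s₀ s₂ s₄ t₁ t₃ e g β a a' c c' : R}
    (hs₄ : s₄ ≠ 0)
    (hdvd : evenQuartic s₀ s₂ s₄ ∣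
      (derivative (evenQuartic s₀ s₂ s₄) - 2 * oddCubic t₁ t₃ - (C e * X ^ 3 + C g * X))
          * (C e * X ^ 3 + C g * X)
        + C β * (C a' - C c' * X ^ 2) * (C a - C c * X ^ 2)) :
    s₄ ^ 2 * (g * (2 * s₂ - 2 * t₁ - g) - β * (c' * a + c * a'))
      - s₄ * s₂ * (e * (2 * s₂ - 2 * t₁ - g) + g * (4 * s₄ - 2 * t₃ - e) + β * c' * c)
      + (s₂ ^ 2 - s₀ * s₄) * (e * (4 * s₄ - 2 * t₃ - e)) = 0 := by
  refine coeff_two_remainder_of_evenQuartic_dvd (a₀ := β * a' * a) hs₄ ?_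
  convert hdvd using 1
  simp only [evenQuartic, oddCubic, derivative_add, derivative_C_mul_X_pow, derivative_C]
  push_cast
  simp only [map_add, map_sub, map_mul, map_ofNat]
  ring

/-- The Pearson equation `(σ L)' = τ L` of a linear functional `L` on polynomials, in its weak form
`L (σ q' + τ q) = 0`. -/
def IsPearson (L : R[X] →ₗ[R] R) (σ τ : R[X]) : Prop :=
  ∀ q, L (σ * derivative q + τ * q) = 0

theorem IsPearson.map_mul_skew {L : R[X] →ₗ[R] R} {σ θ : R[X]} (hL : IsPearson L σ (2 * θ))
    (q r : R[X]) :
    L ((σ * derivative q + θ * q) * r) = -L ((σ * derivative r + θ * r) * q) := by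
  rw [← add_eq_zero_iff_eq_neg, ← map_add, ← hL (q * r), derivative_mul]
  congr 1
  ring

theorem IsPearson.map_mul_self_eq_zero [NoZeroDivisors R] [NeZero (2 : R)] {L : R[X] →ₗ[R] R}
    {σ θ : R[X]} (hL : IsPearson L σ (2 * θ)) (q : R[X]) :
    L ((σ * derivative q + θ * q) * q) = 0 := by
  have h₂ : (2 : R) * L ((σ * derivative q + θ * q) * q) = 0 := by
    linear_combination hL.map_mul_skew q q
  exact (mul_eq_zero.mp h₂).resolve_left two_ne_zero

/-- The coefficient of `X ^ (n - 2)` in `P n`. The factor `X ^ 2` makes it vanish for `n < 2`, where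
the subtraction `n - 2` would be truncated. -/
noncomputable def subleadingCoeff (P : ℕ → R[X]) (n : ℕ) : R :=
  (X ^ 2 * P n).coeff n

theorem subleadingCoeff_of_lt_two (P : ℕ → R[X]) {n : ℕ} (hn : n < 2) :
    subleadingCoeff P n = 0 := by
  rw [subleadingCoeff, coeff_X_pow_mul', if_neg hn.not_ge]

theorem subleadingCoeff_of_two_le (P : ℕ → R[X]) {n : ℕ} (hn : 2 ≤ n) :
    subleadingCoeff P n = (P n).coeff (n - 2) := by
  rw [subleadingCoeff, coeff_X_pow_mul', if_pos hn]

theorem eq_X_of_monic_of_map_eq_zero [NoZeroDivisors R] {L : R[X] →ₗ[R] R} {q : R[X]} (hq : q.Monic)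
    (hdegree : q.natDegree = 1) (hL_one : L 1 ≠ 0) (hL_X : L X = 0) (hL_q : L q = 0) : q = X := by
  have hq_eq := hq.eq_X_add_C hdegree
  rw [hq_eq, map_add, hL_X, zero_add, ← mul_one (C _), C_mul', map_smul, smul_eq_mul,
    mul_eq_zero] at hL_q
  rw [hq_eq, hL_q.resolve_right hL_one, C_0, add_zero]

variable {K : Type*} [Field K]

/-- `P` is the sequence of monic orthogonal polynomials of the functional `L`, with squared norms
`h` and with a three-term recurrence that has no diagonal term, as happens when the odd moments of
`L` vanish. Since `b 0 = 0`, the value of `P (n - 1)` at `n = 0` is irrelevant. -/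
structure IsSymmetricOPS (L : K[X] →ₗ[K] K) (P : ℕ → K[X]) (h b : ℕ → K) :
    Prop where
  monic : ∀ n, (P n).Monic
  natDegree_eq : ∀ n, (P n).natDegree = n
  norm_ne_zero : ∀ n, h n ≠ 0
  orthogonal : ∀ m n, L (P m * P n) = if m = n then h n else 0
  b_zero : b 0 = 0
  X_mul : ∀ n, X * P n = P (n + 1) + C (b n) * P (n - 1)

namespace IsSymmetricOPS

variable {L : K[X] →ₗ[K] K} {P : ℕ → K[X]} {h b : ℕ → K}

theorem of_map_X_eq_zero (monic : ∀ n, (P n).Monic) (natDegree_eq : ∀ n, (P n).natDegree = n)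
    (norm_ne_zero : ∀ n, h n ≠ 0) (orthogonal : ∀ m n, L (P m * P n) = if m = n then h n else 0)
    (b_zero : b 0 = 0) (X_mul : ∀ n, 1 ≤ n → X * P n = P (n + 1) + C (b n) * P (n - 1))
    (map_X : L X = 0) : IsSymmetricOPS L P h b where
  monic := monic
  natDegree_eq := natDegree_eq
  norm_ne_zero := norm_ne_zero
  orthogonal := orthogonal
  b_zero := b_zero
  X_mul n := by
    rcases n with _ | n
    · have hP_zero : P 0 = 1 := eq_one_of_monic_natDegree_zero (monic 0) (natDegree_eq 0)
      have hL_one : L 1 ≠ 0 := by simpa [hP_zero] using (orthogonal 0 0).trans_ne (norm_ne_zero 0)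
      have hP_one : P 1 = X := eq_X_of_monic_of_map_eq_zero (monic 1) (natDegree_eq 1) hL_one map_X
        (by simpa [hP_zero] using orthogonal 1 0)
      simp [hP_zero, hP_one, b_zero]
    · exact X_mul (n + 1) n.succ_pos

theorem degree_eq (H : IsSymmetricOPS L P h b) (n : ℕ) : (P n).degree = n := by
  rw [degree_eq_natDegree (H.monic n).ne_zero, H.natDegree_eq]

theorem map_mul_eq_zero_of_degree_lt (H : IsSymmetricOPS L P h b) {q : K[X]} {n : ℕ}
    (hq : q.degree < n) : L (q * P n) = 0 := by
  let S : Sequence K := ⟨P, H.degree_eq⟩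
  have hspan : Submodule.span K (P '' Set.Iio n) = degreeLT K n :=
    S.span_degreeLT fun i _ => (H.monic i).isUnit_leadingCoeff_of_dvd dvd_rfl
  have hq_mem : q ∈ Submodule.span K (P '' Set.Iio n) := hspan ▸ mem_degreeLT.mpr hq
  clear hq
  induction hq_mem using Submodule.span_induction with
  | mem _ hmem =>
    obtain ⟨i, hi, rfl⟩ := hmem
    rw [H.orthogonal, if_neg (ne_of_lt hi)]
  | zero => simp
  | add _ _ _ _ h₁ h₂ => rw [add_mul, map_add, h₁, h₂, add_zero]
  | smul c _ _ h₁ => rw [smul_mul_assoc, map_smul, h₁, smul_zero]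

theorem eq_zero_of_forall_map_mul_eq_zero (H : IsSymmetricOPS L P h b) {q : K[X]}
    (hq : ∀ j, L (q * P j) = 0) : q = 0 := by
  by_contra hq_ne
  set d := q.natDegree
  have hdegree : (q - C q.leadingCoeff * P d).degree < d := by
    rw [← degree_eq_natDegree hq_ne]
    refine degree_sub_lt_left ?_ hq_ne ?_
    · rw [degree_C_mul (leadingCoeff_ne_zero.mpr hq_ne), H.degree_eq, degree_eq_natDegree hq_ne]
    · rw [leadingCoeff_mul, leadingCoeff_C, H.monic d, mul_one]
  have hpair : L (q * P d) = q.leadingCoeff * h d := by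
    have := H.map_mul_eq_zero_of_degree_lt hdegree
    simpa [sub_mul, C_mul', H.orthogonal, sub_eq_zero] using this
  rw [hq, eq_comm, mul_eq_zero] at hpair
  exact hpair.elim (leadingCoeff_ne_zero.mpr hq_ne) (H.norm_ne_zero d)

theorem P_zero (H : IsSymmetricOPS L P h b) : P 0 = 1 :=
  eq_one_of_monic_natDegree_zero (H.monic 0) (H.natDegree_eq 0)

theorem b_succ_mul_norm (H : IsSymmetricOPS L P h b) (n : ℕ) : b (n + 1) * h n = h (n + 1) := by
  have hsymm : L (X * P (n + 1) * P n) = L (X * P n * P (n + 1)) := by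
    congr 1
    ring
  rw [H.X_mul, H.X_mul] at hsymm
  simpa [add_mul, C_mul', H.orthogonal, show n - 1 ≠ n + 1 by omega,
    show n + 1 + 1 ≠ n by omega] using hsymm

theorem b_succ_ne_zero (H : IsSymmetricOPS L P h b) (n : ℕ) : b (n + 1) ≠ 0 :=
  left_ne_zero_of_mul ((H.b_succ_mul_norm n).symm ▸ H.norm_ne_zero (n + 1))

theorem isCoprime_succ (H : IsSymmetricOPS L P h b) (n : ℕ) : IsCoprime (P n) (P (n + 1)) := by
  induction n with
  | zero => exact H.P_zero ▸ isCoprime_one_left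
  | succ n ih =>
    obtain ⟨u, v, huv⟩ := ih
    have hC : C (b (n + 1))⁻¹ * C (b (n + 1)) = 1 := by
      rw [← C_mul, inv_mul_cancel₀ (H.b_succ_ne_zero n), C_1]
    have hrec := H.X_mul (n + 1)
    rw [Nat.add_sub_cancel] at hrec
    exact ⟨v + u * C (b (n + 1))⁻¹ * X, -(u * C (b (n + 1))⁻¹), by
      linear_combination huv + u * C (b (n + 1))⁻¹ * hrec + u * P n * hC⟩

theorem coeff_self_add (H : IsSymmetricOPS L P h b) (n i : ℕ) :
    (P n).coeff (n + i) = if i = 0 then 1 else 0 := by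
  rcases i with _ | i
  · simpa [H.natDegree_eq n] using (H.monic n).coeff_natDegree
  · exact coeff_eq_zero_of_natDegree_lt (by rw [H.natDegree_eq]; omega)

theorem coeff_succ_self (H : IsSymmetricOPS L P h b) (n : ℕ) : (P (n + 1)).coeff n = 0 := by
  induction n with
  | zero =>
    have hP_one := H.X_mul 0
    simp only [H.P_zero, H.b_zero] at hP_one
    simp [show P 1 = X by simpa using hP_one.symm]
  | succ n ih =>
    have hrec := congrArg (coeff · (n + 1)) (H.X_mul (n + 1))
    simpa [coeff_X_mul, ih, H.coeff_self_add n 1] using hrec.symm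

theorem coeff_X_sq_mul_self_add (H : IsSymmetricOPS L P h b) (n i : ℕ) :
    (X ^ 2 * P n).coeff (n + i)
      = if i = 0 then subleadingCoeff P n else if i = 2 then 1 else 0 := by
  rcases i with _ | _ | i
  · rfl
  · rcases n with _ | n
    · simp [coeff_X_pow_mul']
    · simpa [coeff_X_pow_mul] using H.coeff_succ_self n
  · rw [← add_assoc, ← add_assoc, add_assoc _ 1 1, coeff_X_pow_mul, H.coeff_self_add]
    simp

theorem subleadingCoeff_sub_succ (H : IsSymmetricOPS L P h b) (n : ℕ) :
    subleadingCoeff P n - subleadingCoeff P (n + 1) = b n := by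
  have hrec : X * (X ^ 2 * P n) = X ^ 2 * P (n + 1) + C (b n) * (X ^ 2 * P (n - 1)) := by
    linear_combination X ^ 2 * H.X_mul n
  have hcoeff := congrArg (coeff · (n + 1)) hrec
  simp only [coeff_X_mul, coeff_add, coeff_C_mul] at hcoeff
  have hlast : b n * (X ^ 2 * P (n - 1)).coeff (n + 1) = b n := by
    rcases n with _ | n
    · simp [H.b_zero]
    · simp [H.coeff_X_sq_mul_self_add n 2]
  rw [hlast] at hcoeff
  exact sub_eq_iff_eq_add'.mpr hcoeff

end IsSymmetricOPS

/-- The coefficient of `P (n + 1)` in the expansion of `σ Pₙ' + θ Pₙ` in the basis `P`, for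
`σ = s₄ X⁴ + s₂ X² + s₀` and `θ = t₃ X³ + t₁ X`. -/
def raisingCoeff (s₂ s₄ t₁ t₃ : K) (p b : ℕ → K) (n : ℕ) : K :=
  n * s₂ + t₁ - 2 * s₄ * p n + (n * s₄ + t₃) * (b n + b (n + 1) + b (n + 2))

/-- The polynomial `Aₙ` in the ladder relation `σ Pₙ' = Bₙ Pₙ + bₙ Aₙ Pₙ₋₁`, for
`σ = s₄ X⁴ + s₂ X² + s₀` and a Pearson equation with `τ = 2 (t₃ X³ + t₁ X)`, in terms of the
subleading coefficients `p` and the recurrence coefficients `b`. -/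
noncomputable def ladderA (s₂ s₄ t₁ t₃ : K) (p b : ℕ → K) (n : ℕ) : K[X] :=
  C (4 * s₄ * p n - (2 * n - 1) * s₂ - 2 * t₁ - ((2 * n - 1) * s₄ + 2 * t₃) * (b n + b (n + 1)))
    - C ((2 * n - 3) * s₄ + 2 * t₃) * X ^ 2

/-- The polynomial `Bₙ` in the ladder relation `σ Pₙ' = Bₙ Pₙ + bₙ Aₙ Pₙ₋₁`, with the parameters of
`ladderA`. -/
noncomputable def ladderB (s₂ s₄ t₃ : K) (p b : ℕ → K) (n : ℕ) : K[X] :=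
  C (n * s₄) * X ^ 3 + C (((2 * n - 3) * s₄ + 2 * t₃) * b n - 2 * s₄ * p n + n * s₂) * X

namespace IsSymmetricOPS

variable {L : K[X] →ₗ[K] K} {P : ℕ → K[X]} {h b : ℕ → K}

theorem degree_skew_sub_lt (H : IsSymmetricOPS L P h b) (s₀ s₂ s₄ t₁ t₃ : K) (n : ℕ) :
    (evenQuartic s₀ s₂ s₄ * derivative (P n) + oddCubic t₁ t₃ * P n
      - (C (n * s₄ + t₃) * P (n + 3)
        + C (raisingCoeff s₂ s₄ t₁ t₃ (subleadingCoeff P) b n) * P (n + 1))).degree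
      < (n + 1 : ℕ) := by
  have hp : subleadingCoeff P (n + 3) = subleadingCoeff P n - b n - b (n + 1) - b (n + 2) := by
    linear_combination -H.subleadingCoeff_sub_succ n - H.subleadingCoeff_sub_succ (n + 1)
      - H.subleadingCoeff_sub_succ (n + 2)
  rw [degree_lt_iff_coeff_zero]
  intro m hm
  obtain ⟨i, rfl⟩ := Nat.exists_eq_add_of_le hm
  rw [show n + 1 + i = n + i + 1 by ring, coeff_sub, coeff_add (C _ * _), coeff_C_mul, coeff_C_mul,
    coeff_evenQuartic_mul_derivative_add_oddCubic_mul, H.coeff_X_sq_mul_self_add,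
    H.coeff_self_add, add_assoc n i 2, H.coeff_self_add, ← coeff_X_pow_mul (P (n + 3)) 2,
    show n + i + 1 + 2 = n + 3 + i by ring, H.coeff_X_sq_mul_self_add,
    show n + i + 1 = n + 1 + i by ring, H.coeff_self_add, hp]
  rcases i with _ | _ | _ | i
  · simp only [raisingCoeff, zero_add, add_zero, two_ne_zero, if_true, if_false, mul_one, mul_zero]
    ring
  · simp
  · simp
  · simp

theorem map_skew_mul [NeZero (2 : K)] (H : IsSymmetricOPS L P h b) {s₀ s₂ s₄ t₁ t₃ : K}
    (hL : IsPearson L (evenQuartic s₀ s₂ s₄) (2 * oddCubic t₁ t₃)) (n j : ℕ) :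
    L ((evenQuartic s₀ s₂ s₄ * derivative (P n) + oddCubic t₁ t₃ * P n) * P j)
      = (n * s₄ + t₃) * (if n + 3 = j then h j else 0)
        + raisingCoeff s₂ s₄ t₁ t₃ (subleadingCoeff P) b n * (if n + 1 = j then h j else 0)
        - (j * s₄ + t₃) * (if j + 3 = n then h n else 0)
        - raisingCoeff s₂ s₄ t₁ t₃ (subleadingCoeff P) b j * (if j + 1 = n then h n else 0) := by
  have upper {n j : ℕ} (hnj : n < j) :
      L ((evenQuartic s₀ s₂ s₄ * derivative (P n) + oddCubic t₁ t₃ * P n) * P j)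
        = (n * s₄ + t₃) * (if n + 3 = j then h j else 0)
          + raisingCoeff s₂ s₄ t₁ t₃ (subleadingCoeff P) b n
            * (if n + 1 = j then h j else 0) := by
    have hzero := H.map_mul_eq_zero_of_degree_lt
      ((H.degree_skew_sub_lt s₀ s₂ s₄ t₁ t₃ n).trans_le (Nat.cast_le.mpr hnj))
    rw [sub_mul, map_sub, sub_eq_zero] at hzero
    rw [hzero]
    simp only [add_mul, C_mul', smul_mul_assoc, map_add, map_smul, smul_eq_mul, H.orthogonal]
  rcases lt_trichotomy n j with hlt | rfl | hgt
  · rw [upper hlt, if_neg (show j + 3 ≠ n by omega), if_neg (show j + 1 ≠ n by omega)]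
    ring
  · rw [hL.map_mul_self_eq_zero]
    simp
  · rw [hL.map_mul_skew, upper hgt, if_neg (show n + 3 ≠ j by omega),
      if_neg (show n + 1 ≠ j by omega)]
    ring

theorem structure_relation [NeZero (2 : K)] (H : IsSymmetricOPS L P h b) {s₀ s₂ s₄ t₁ t₃ : K}
    (hL : IsPearson L (evenQuartic s₀ s₂ s₄) (2 * oddCubic t₁ t₃)) (n : ℕ) :
    evenQuartic s₀ s₂ s₄ * derivative (P n) + oddCubic t₁ t₃ * P n
      = C (n * s₄ + t₃) * P (n + 3)
        + C (raisingCoeff s₂ s₄ t₁ t₃ (subleadingCoeff P) b n) * P (n + 1)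
        - C (b n * raisingCoeff s₂ s₄ t₁ t₃ (subleadingCoeff P) b (n - 1)) * P (n - 1)
        - C (b n * b (n - 1) * b (n - 2) * ((n - 3 : ℕ) * s₄ + t₃)) * P (n - 3) := by
  have lower_one (j : ℕ) :
      b n * raisingCoeff s₂ s₄ t₁ t₃ (subleadingCoeff P) b (n - 1) * (if n - 1 = j then h j else 0)
        = raisingCoeff s₂ s₄ t₁ t₃ (subleadingCoeff P) b j * (if j + 1 = n then h n else 0) := by
    rcases n with _ | n
    · simp [H.b_zero]
    · rcases eq_or_ne n j with rfl | hne
      · simp [← H.b_succ_mul_norm, mul_left_comm, mul_assoc]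
      · simp [hne, hne.symm]
  have lower_three (j : ℕ) :
      b n * b (n - 1) * b (n - 2) * ((n - 3 : ℕ) * s₄ + t₃) * (if n - 3 = j then h j else 0)
        = (j * s₄ + t₃) * (if j + 3 = n then h n else 0) := by
    rcases n with _ | _ | _ | n
    · simp [H.b_zero]
    · simp [H.b_zero]
    · simp [H.b_zero]
    · rcases eq_or_ne n j with rfl | hne
      · simp [← H.b_succ_mul_norm, mul_left_comm, mul_assoc]
      · simp [hne, hne.symm]
  rw [← sub_eq_zero]
  refine H.eq_zero_of_forall_map_mul_eq_zero fun j => ?_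
  rw [sub_mul, map_sub, H.map_skew_mul hL]
  simp only [sub_mul, add_mul, C_mul', smul_mul_assoc, map_sub, map_add, map_smul, smul_eq_mul,
    H.orthogonal]
  linear_combination lower_one j + lower_three j

theorem C_mul_X_mul_pred (H : IsSymmetricOPS L P h b) (n : ℕ) :
    C (b n) * (X * P (n - 1)) = C (b n) * (P n + C (b (n - 1)) * P (n - 2)) := by
  rcases n with _ | n
  · simp [H.b_zero]
  · rw [H.X_mul, Nat.add_sub_cancel]
    rfl

theorem P_add_three (H : IsSymmetricOPS L P h b) (n : ℕ) :
    P (n + 3) = (X ^ 3 - C (b (n + 1) + b (n + 2)) * X) * P n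
      - (X ^ 2 - C (b (n + 2))) * (C (b n) * P (n - 1)) := by
  have hrec₁ : X * P (n + 1) = P (n + 2) + C (b (n + 1)) * P n := H.X_mul (n + 1)
  have hrec₂ : X * P (n + 2) = P (n + 3) + C (b (n + 2)) * P (n + 1) := H.X_mul (n + 2)
  rw [C_add]
  linear_combination -hrec₂ - X * hrec₁ + (C (b (n + 2)) - X ^ 2) * H.X_mul n

theorem C_mul_P_sub_three (H : IsSymmetricOPS L P h b) (n : ℕ) :
    C (b n * b (n - 1) * b (n - 2)) * P (n - 3)
      = (X ^ 2 - C (b (n - 1))) * (C (b n) * P (n - 1)) - C (b n) * X * P n := by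
  have hpred : C (b (n - 1)) * (X * P (n - 2))
      = C (b (n - 1)) * (P (n - 1) + C (b (n - 2)) * P (n - 3)) := H.C_mul_X_mul_pred (n - 1)
  rw [C_mul, C_mul]
  linear_combination -C (b n) * hpred - X * H.C_mul_X_mul_pred n

theorem ladder_relation [NeZero (2 : K)] (H : IsSymmetricOPS L P h b) {s₀ s₂ s₄ t₁ t₃ : K}
    (hL : IsPearson L (evenQuartic s₀ s₂ s₄) (2 * oddCubic t₁ t₃)) (n : ℕ) :
    evenQuartic s₀ s₂ s₄ * derivative (P n)
      = ladderB s₂ s₄ t₃ (subleadingCoeff P) b n * P n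
        + ladderA s₂ s₄ t₁ t₃ (subleadingCoeff P) b n * (C (b n) * P (n - 1)) := by
  have lower_one :
      b n * raisingCoeff s₂ s₄ t₁ t₃ (subleadingCoeff P) b (n - 1)
        = b n * ((n - 1) * s₂ + t₁ - 2 * s₄ * (subleadingCoeff P n + b (n - 1))
          + ((n - 1) * s₄ + t₃) * (b (n - 1) + b n + b (n + 1))) := by
    rcases n with _ | n
    · simp [H.b_zero]
    · simp [raisingCoeff, ← H.subleadingCoeff_sub_succ n]
  have lower_three : b n * b (n - 1) * b (n - 2) * ((n - 3 : ℕ) * s₄ + t₃)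
      = b n * b (n - 1) * b (n - 2) * ((n - 3) * s₄ + t₃) := by
    rcases n with _ | _ | _ | n
    · simp [H.b_zero]
    · simp [H.b_zero]
    · simp [H.b_zero]
    · push_cast [Nat.add_sub_cancel]
      ring
  have hstruct := H.structure_relation hL n
  rw [lower_one, lower_three] at hstruct
  linear_combination (norm := skip) hstruct + C (n * s₄ + t₃) * H.P_add_three n
    - C (raisingCoeff s₂ s₄ t₁ t₃ (subleadingCoeff P) b n) * H.X_mul n
    - C ((n - 3) * s₄ + t₃) * H.C_mul_P_sub_three n
  simp only [raisingCoeff, ladderA, ladderB, oddCubic, map_add, map_sub, map_mul,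
    map_natCast, map_ofNat, map_one]
  ring

theorem ladderB_add_ladderB_succ (H : IsSymmetricOPS L P h b) (s₀ s₂ s₄ t₁ t₃ : K) (n : ℕ) :
    ladderB s₂ s₄ t₃ (subleadingCoeff P) b n + ladderB s₂ s₄ t₃ (subleadingCoeff P) b (n + 1)
        + X * ladderA s₂ s₄ t₁ t₃ (subleadingCoeff P) b n
      = derivative (evenQuartic s₀ s₂ s₄) - 2 * oddCubic t₁ t₃ := by
  have hp : subleadingCoeff P (n + 1) = subleadingCoeff P n - b n := by
    linear_combination -H.subleadingCoeff_sub_succ n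
  simp only [ladderA, ladderB, hp, evenQuartic, oddCubic, derivative_mul,
    derivative_C, derivative_X_pow, map_add, map_sub, map_mul, map_natCast, Nat.cast_add,
    map_ofNat, map_one]
  push_cast
  ring

theorem evenQuartic_dvd_ladder_det [NeZero (2 : K)] (H : IsSymmetricOPS L P h b)
    {s₀ s₂ s₄ t₁ t₃ : K} (hL : IsPearson L (evenQuartic s₀ s₂ s₄) (2 * oddCubic t₁ t₃)) (n : ℕ) :
    evenQuartic s₀ s₂ s₄ ∣
      (derivative (evenQuartic s₀ s₂ s₄) - 2 * oddCubic t₁ t₃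
          - ladderB s₂ s₄ t₃ (subleadingCoeff P) b (n + 1))
        * ladderB s₂ s₄ t₃ (subleadingCoeff P) b (n + 1)
      + C (b (n + 1)) * ladderA s₂ s₄ t₁ t₃ (subleadingCoeff P) b n
        * ladderA s₂ s₄ t₁ t₃ (subleadingCoeff P) b (n + 1) := by
  set A := ladderA s₂ s₄ t₁ t₃ (subleadingCoeff P) b
  set B := ladderB s₂ s₄ t₃ (subleadingCoeff P) b
  have raising : evenQuartic s₀ s₂ s₄ * derivative (P n)
      = (derivative (evenQuartic s₀ s₂ s₄) - 2 * oddCubic t₁ t₃ - B (n + 1)) * P n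
        + -A n * P (n + 1) := by
    linear_combination H.ladder_relation hL n - A n * H.X_mul n
      + P n * H.ladderB_add_ladderB_succ s₀ s₂ s₄ t₁ t₃ n
  have lowering : evenQuartic s₀ s₂ s₄ * derivative (P (n + 1))
      = C (b (n + 1)) * A (n + 1) * P n + B (n + 1) * P (n + 1) := by
    have := H.ladder_relation hL (n + 1)
    rw [Nat.add_sub_cancel] at this
    linear_combination this
  have hdet := dvd_mul_sub_mul_of_isCoprime (H.isCoprime_succ n)
    (Dvd.intro _ raising) (Dvd.intro _ lowering)
  convert hdet using 1
  ring

theorem quadratic_relation [NeZero (2 : K)] (H : IsSymmetricOPS L P h b) {s₀ s₂ s₄ t₁ t₃ : K}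
    (hs₄ : s₄ ≠ 0) (hL : IsPearson L (evenQuartic s₀ s₂ s₄) (2 * oddCubic t₁ t₃)) (n : ℕ) :
    4 * s₄ ^ 2 * subleadingCoeff P n ^ 2
        + 4 * s₄ * ((2 * n - 5) * s₄ + 2 * t₃) * b n * subleadingCoeff P n
      = ((2 * n - 5) * s₄ + 2 * t₃) * ((2 * n - 1) * s₄ + 2 * t₃) * b n * (b n + b (n + 1))
        + ((2 * n - 3) * s₄ + 2 * t₃) * ((2 * n - 7) * s₄ + 2 * t₃) * b n * b (n - 1)
        + ((2 * n - 5) * s₄ + 2 * t₃) * ((2 * n - 1) * s₂ + 2 * t₁) * b n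
        + 4 * (s₂ * (s₄ - t₃) + s₄ * t₁) * subleadingCoeff P n
        + n * s₀ * ((n - 4) * s₄ + 2 * t₃) := by
  rcases n with _ | n
  · simp [H.b_zero, subleadingCoeff]
  rw [Nat.add_sub_cancel]
  have hp : subleadingCoeff P n = subleadingCoeff P (n + 1) + b n := by
    linear_combination H.subleadingCoeff_sub_succ n
  have hdvd := H.evenQuartic_dvd_ladder_det hL n
  rw [ladderA, ladderA, ladderB, hp] at hdvd
  have hrem := remainder_det_eq_zero_of_evenQuartic_dvd hs₄ hdvd
  push_cast at hrem ⊢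
  refine mul_left_cancel₀ (pow_ne_zero 2 hs₄) ?_
  linear_combination -hrem

end IsSymmetricOPS

end OrthogonalPolynomials

section Weight

open Polynomial

theorem integral_eq_zero_of_odd {f : ℝ → ℝ} (hf : Function.Odd f) (a : ℝ) :
    ∫ x in -a..a, f x = 0 := by
  have hneg := intervalIntegral.integral_comp_neg (a := -a) (b := a) f
  simp only [hf _, neg_neg, intervalIntegral.integral_neg] at hneg
  exact neg_eq_self.mp hneg

variable {w : ℝ → ℝ} {a b : ℝ}

theorem intervalIntegrable_eval_mul (hw : IntervalIntegrable w volume a b) (q : ℝ[X]) :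
    IntervalIntegrable (fun x => q.eval x * w x) volume a b :=
  hw.continuousOn_mul q.continuous.continuousOn

/-- The functional `q ↦ ∫ x in a..b, q(x) w(x)` on polynomials, whose values at `X ^ n` are the
moments of the weight `w`. -/
noncomputable def momentFunctional (w : ℝ → ℝ) (hw : IntervalIntegrable w volume a b) :
    ℝ[X] →ₗ[ℝ] ℝ where
  toFun q := ∫ x in a..b, q.eval x * w x
  map_add' q r := by
    simp only [eval_add, add_mul]
    exact intervalIntegral.integral_add (intervalIntegrable_eval_mul hw q)
      (intervalIntegrable_eval_mul hw r)
  map_smul' c q := by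
    simp only [eval_smul, smul_eq_mul, mul_assoc, RingHom.id_apply]
    exact intervalIntegral.integral_const_mul c _

theorem momentFunctional_apply (hw : IntervalIntegrable w volume a b) (q : ℝ[X]) :
    momentFunctional w hw q = ∫ x in a..b, q.eval x * w x :=
  rfl

theorem momentFunctional_X_eq_zero_of_even (hw : IntervalIntegrable w volume (-a) a)
    (heven : Function.Even w) : momentFunctional w hw X = 0 := by
  refine integral_eq_zero_of_odd (fun x => ?_) a
  rw [eval_X, eval_X, heven, neg_mul]

theorem isPearson_momentFunctional (hab : a ≤ b) (hw : IntervalIntegrable w volume a b)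
    {W : ℝ → ℝ} {σ τ : ℝ[X]} (hcont : ContinuousOn W (Set.Icc a b)) (ha : W a = 0) (hb : W b = 0)
    (hW : ∀ x ∈ Set.Ioo a b, W x = σ.eval x * w x)
    (hderiv : ∀ x ∈ Set.Ioo a b, HasDerivAt W (τ.eval x * w x) x) :
    IsPearson (momentFunctional w hw) σ τ := by
  intro q
  have hderiv_mul : ∀ x ∈ Set.Ioo a b, HasDerivAt (fun y => q.eval y * W y)
      ((σ * derivative q + τ * q).eval x * w x) x := fun x hx => by
    refine ((q.hasDerivAt x).mul (hderiv x hx)).congr_deriv ?_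
    rw [hW x hx, eval_add, eval_mul, eval_mul]
    ring
  rw [momentFunctional_apply, intervalIntegral.integral_eq_sub_of_hasDerivAt_of_le hab
    (q.continuous.continuousOn.mul hcont) hderiv_mul (intervalIntegrable_eval_mul hw _)]
  simp [ha, hb]

theorem one_sub_mul_sq_pos {k x : ℝ} (hk : k < 1) (hx : x ∈ Set.Icc (-1 : ℝ) 1) :
    0 < 1 - k * x ^ 2 := by
  have hx_sq : x ^ 2 ≤ 1 := (sq_le_one_iff_abs_le_one x).mpr (abs_le.mpr hx)
  rcases hx_sq.lt_or_eq with hlt | heq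
  · linarith [mul_nonneg (sub_nonneg.mpr hk.le) (sq_nonneg x)]
  · rwa [heq, mul_one, sub_pos]

theorem hasDerivAt_one_sub_mul_sq_rpow {k x : ℝ} (hx : 1 - k * x ^ 2 ≠ 0) (γ : ℝ) :
    HasDerivAt (fun y : ℝ => (1 - k * y ^ 2) ^ (γ + 1))
      (-(2 * k * x) * (γ + 1) * (1 - k * x ^ 2) ^ γ) x := by
  have hbase : HasDerivAt (fun y : ℝ => 1 - k * y ^ 2) (-(2 * k * x)) x := by
    refine (((hasDerivAt_pow 2 x).const_mul k).const_sub 1).congr_deriv ?_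
    ring
  simpa only [add_sub_cancel_right] using hbase.rpow_const (p := γ + 1) (Or.inl hx)

theorem isPearson_generalizedJacobi {α β k : ℝ} (hα : -1 < α) (hk : k < 1)
    (hw : ∀ x, w x = (1 - x ^ 2) ^ α * (1 - k * x ^ 2) ^ β)
    (hint : IntervalIntegrable w volume (-1) 1) :
    IsPearson (momentFunctional w hint) (evenQuartic 1 (-(1 + k)) k)
      (2 * oddCubic (-(1 + α + (1 + β) * k)) ((2 + α + β) * k)) := by
  have hα' : 0 < α + 1 := by linarith
  refine isPearson_momentFunctional (by norm_num) hint
    (W := fun x => (1 - x ^ 2) ^ (α + 1) * (1 - k * x ^ 2) ^ (β + 1)) ?_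
    (by simp [Real.zero_rpow hα'.ne']) (by simp [Real.zero_rpow hα'.ne'])
    (fun x hx => ?_) (fun x hx => ?_)
  · refine ContinuousOn.mul ?_ ?_
    · exact ContinuousOn.rpow_const (by fun_prop) fun x _ => Or.inr hα'.le
    · exact ContinuousOn.rpow_const (by fun_prop) fun x hx => Or.inl (one_sub_mul_sq_pos hk hx).ne'
  all_goals
    have hx₁ : 1 - x ^ 2 ≠ 0 := by nlinarith [hx.1, hx.2]
    have hx₂ : 1 - k * x ^ 2 ≠ 0 := (one_sub_mul_sq_pos hk (Set.Ioo_subset_Icc_self hx)).ne'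
  · simp only [hw, evenQuartic, eval_add, eval_mul, eval_C, eval_pow, eval_X]
    rw [Real.rpow_add_one hx₁, Real.rpow_add_one hx₂]
    ring
  · have hderiv₁ := hasDerivAt_one_sub_mul_sq_rpow (k := 1) (by rwa [one_mul]) α
    simp only [one_mul] at hderiv₁
    refine (hderiv₁.mul (hasDerivAt_one_sub_mul_sq_rpow hx₂ β)).congr_deriv ?_
    simp only [hw, oddCubic, eval_add, eval_mul, eval_C, eval_pow, eval_X, eval_ofNat]
    rw [Real.rpow_add_one hx₁, Real.rpow_add_one hx₂]
    ring

end Weight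

theorem stmt_0_general
    (α β k2 : ℝ) (hα : -1 < α) (hk2 : k2 < 1) (hk2_ne : k2 ≠ 0)
    (w : ℝ → ℝ)
    (hw : ∀ x : ℝ, w x = (1 - x ^ 2) ^ α * (1 - k2 * x ^ 2) ^ β)
    (P : ℕ → Polynomial ℝ)
    (hPmonic : ∀ n, (P n).Monic)
    (hPdeg : ∀ n, (P n).natDegree = n)
    (h : ℕ → ℝ) (hpos : ∀ n, 0 < h n)
    (horth : ∀ m n : ℕ,
      (∫ x in (-1:ℝ)..1, (P m).eval x * (P n).eval x * w x)
        = if m = n then h n else 0)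
    (b : ℕ → ℝ) (hb0 : b 0 = 0)
    (hrec : ∀ n : ℕ, 1 ≤ n →
      Polynomial.X * P n = P (n + 1) + Polynomial.C (b n) * P (n - 1))
    (p1 : ℕ → ℝ) (hp10 : p1 0 = 0) (hp11 : p1 1 = 0)
    (hp1 : ∀ n : ℕ, 2 ≤ n → p1 n = (P n).coeff (n - 2)) (n : ℕ) :
    0 = k2 * p1 n ^ 2
      + (2 * k2 * (α + β + (n:ℝ) - 1/2) * b n - α * k2 - β) * p1 n
      - k2 * (α + β + (n:ℝ) + 3/2) * (α + β + (n:ℝ) - 1/2) * b n ^ 2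
      - (k2 * (α + β + (n:ℝ) + 3/2) * (α + β + (n:ℝ) - 1/2) * b (n + 1)
          - ((β + (n:ℝ) + 1/2) * k2 + (α + (n:ℝ) + 1/2)) * (α + β + (n:ℝ) - 1/2)
          + k2 * (α + β + (n:ℝ) + 1/2) * (α + β + (n:ℝ) - 3/2) * b (n - 1)) * b n
      - ((n:ℝ)/2) * ((n:ℝ)/2 + α + β) := by
  have hP_zero : P 0 = 1 := Polynomial.eq_one_of_monic_natDegree_zero (hPmonic 0) (hPdeg 0)
  have hint : IntervalIntegrable w volume (-1) 1 := by
    refine intervalIntegral.intervalIntegrable_of_integral_ne_zero ?_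
    simpa [hP_zero] using (horth 0 0).trans_ne (hpos 0).ne'
  have hX : momentFunctional w hint Polynomial.X = 0 :=
    momentFunctional_X_eq_zero_of_even hint fun x => by simp only [hw, neg_sq]
  have H : IsSymmetricOPS (momentFunctional w hint) P h b :=
    .of_map_X_eq_zero hPmonic hPdeg (fun n => (hpos n).ne')
      (fun m n => by simpa only [momentFunctional_apply, Polynomial.eval_mul] using horth m n)
      hb0 hrec hX
  have hp : p1 n = subleadingCoeff P n := by
    rcases lt_or_ge n 2 with hn | hn
    · rw [subleadingCoeff_of_lt_two P hn]
      interval_cases n <;> assumption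
    · rw [hp1 n hn, subleadingCoeff_of_two_le P hn]
  have hquad := H.quadratic_relation hk2_ne (isPearson_generalizedJacobi hα hk2 hw hint) n
  rw [← hp] at hquad
  refine mul_left_cancel₀ (mul_ne_zero four_ne_zero hk2_ne) ?_
  linear_combination -hquad

/-- For the weight `w(x) = (1-x²)^α (1-k²x²)^β` on `[-1,1]`, the
sub-leading coefficient `p1(n)` and the recurrence coefficients `β_n` of the monic
orthogonal polynomials satisfy a quadratic difference relation. -/
theorem stmt_0
    (α β k2 : ℝ) (hα : -1 < α) (hk2 : k2 ∈ Set.Ioo (0:ℝ) 1)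
    (w : ℝ → ℝ)
    (hw : ∀ x : ℝ, w x = (1 - x ^ 2) ^ α * (1 - k2 * x ^ 2) ^ β)
    (P : ℕ → Polynomial ℝ)
    (hPmonic : ∀ n, (P n).Monic)
    (hPdeg : ∀ n, (P n).natDegree = n)
    (h : ℕ → ℝ) (hpos : ∀ n, 0 < h n)
    (horth : ∀ m n : ℕ,
      (∫ x in (-1:ℝ)..1, (P m).eval x * (P n).eval x * w x)
        = if m = n then h n else 0)
    (b : ℕ → ℝ) (hb0 : b 0 = 0)
    (hrec : ∀ n : ℕ, 1 ≤ n →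
      Polynomial.X * P n = P (n + 1) + Polynomial.C (b n) * P (n - 1))
    (p1 : ℕ → ℝ) (hp10 : p1 0 = 0) (hp11 : p1 1 = 0)
    (hp1 : ∀ n : ℕ, 2 ≤ n → p1 n = (P n).coeff (n - 2)) :
    ∀ n : ℕ, 1 ≤ n →
      0 = k2 * p1 n ^ 2
        + (2 * k2 * (α + β + (n:ℝ) - 1/2) * b n - α * k2 - β) * p1 n
        - k2 * (α + β + (n:ℝ) + 3/2) * (α + β + (n:ℝ) - 1/2) * b n ^ 2
        - (k2 * (α + β + (n:ℝ) + 3/2) * (α + β + (n:ℝ) - 1/2) * b (n + 1)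
            - ((β + (n:ℝ) + 1/2) * k2 + (α + (n:ℝ) + 1/2)) * (α + β + (n:ℝ) - 1/2)
            + k2 * (α + β + (n:ℝ) + 1/2) * (α + β + (n:ℝ) - 3/2) * b (n - 1)) * b n
        - ((n:ℝ)/2) * ((n:ℝ)/2 + α + β) :=
  fun n _ => stmt_0_general α β k2 hα hk2.2 hk2.1.ne' w hw P hPmonic hPdeg h hpos horth b hb0 hrec
    p1 hp10 hp11 hp1 n
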